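/- Let M be an acyclic matching on X and let M' = { (σ ∪ {w_1} → σ) : σ ∈ X } ∪ { (σ ∪ {w_i} → τ ∪ {w_i}) : (σ → τ) ∈ M, 2 ≤ i ≤ n+1 }. Then M' is an acyclic matching on X', i.e., the directed graph obtained from the Hasse diagram H(X') by reversing the arcs of M' contains no directed cycle. -/

import Mathlib

open Finset

/-- A (finite) simplicial complex: a finite collection of nonempty finite sets
    of vertices, closed under taking nonempty subsets. -/
def IsComplex {U : Type*} [DecidableEq U] (X : Finset (Finset U)) : Prop :=
  (∀ σ ∈ X, σ ≠ ∅) ∧ ∀ σ ∈ X, ∀ τ : Finset U, τ ⊆ σ → τ ≠ ∅ → τ ∈ X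

/-- Arc of the Hasse diagram `H(X)`: from `σ` to `τ` iff `τ ⊂ σ` and
    `dim σ = dim τ + 1` (i.e. `|σ| = |τ| + 1`). -/
def HasseArc {U : Type*} [DecidableEq U] (X : Finset (Finset U)) (σ τ : Finset U) : Prop :=
  σ ∈ X ∧ τ ∈ X ∧ τ ⊂ σ ∧ σ.card = τ.card + 1

/-- A matching on `X`: a set of arcs of `H(X)` such that every simplex of `X`
    belongs to at most one arc. -/
def IsMatching {U : Type*} [DecidableEq U] (X : Finset (Finset U))
    (M : Set (Finset U × Finset U)) : Prop :=
  (∀ p ∈ M, HasseArc X p.1 p.2) ∧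
  ∀ p ∈ M, ∀ q ∈ M, p ≠ q → p.1 ≠ q.1 ∧ p.1 ≠ q.2 ∧ p.2 ≠ q.1 ∧ p.2 ≠ q.2

/-- Arc of the modified Hasse diagram `H(X)^M`, obtained from `H(X)` by
    reversing the direction of each arc in `M`. -/
def ModArc {U : Type*} [DecidableEq U] (X : Finset (Finset U))
    (M : Set (Finset U × Finset U)) (a b : Finset U) : Prop :=
  (HasseArc X a b ∧ (a, b) ∉ M) ∨ (b, a) ∈ M

/-- An acyclic matching: a matching such that `H(X)^M` has no directed cycle. -/
def IsAcyclicMatching {U : Type*} [DecidableEq U] (X : Finset (Finset U))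
    (M : Set (Finset U × Finset U)) : Prop :=
  IsMatching X M ∧ ∀ a : Finset U, ¬ Relation.TransGen (ModArc X M) a a

/-- `σ` is a critical simplex of the matching `M` on `X`: it belongs to no arc of `M`. -/
def IsCritical {U : Type*} [DecidableEq U] (X : Finset (Finset U))
    (M : Set (Finset U × Finset U)) (σ : Finset U) : Prop :=
  σ ∈ X ∧ ∀ p ∈ M, p.1 ≠ σ ∧ p.2 ≠ σ

/-- `X` has dimension exactly `d` (the dimension of a simplex `σ` is `|σ| - 1`). -/
def HasDim {U : Type*} [DecidableEq U] (X : Finset (Finset U)) (d : ℕ) : Prop :=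
  (∀ σ ∈ X, σ.card ≤ d + 1) ∧ ∃ σ ∈ X, σ.card = d + 1

/-- The complex `X' = X ∪ { σ ∪ {wᵢ} : σ ∈ X ∪ {∅}, i = 1, …, n+1 }`, obtained
    from `X` by attaching `n+1` cones with apexes `w 0, …, w n`. -/
def coneCx {U : Type*} [DecidableEq U] (X : Finset (Finset U)) (n : ℕ)
    (w : Fin (n + 1) → U) : Finset (Finset U) :=
  X ∪ Finset.univ.biUnion (fun i : Fin (n + 1) =>
    (insert (∅ : Finset U) X).image (fun σ => insert (w i) σ))

/-- The matching `M'` on `X'`: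
    `M' = { (σ ∪ {w₁} → σ) : σ ∈ X } ∪ { (σ ∪ {wᵢ} → τ ∪ {wᵢ}) : (σ → τ) ∈ M, 2 ≤ i ≤ n+1 }`. -/
def coneMatch {U : Type*} [DecidableEq U] (X : Finset (Finset U))
    (M : Set (Finset U × Finset U)) (n : ℕ) (w : Fin (n + 1) → U) :
    Set (Finset U × Finset U) :=
  {p | ∃ σ ∈ X, p = (insert (w 0) σ, σ)} ∪
  {p | ∃ q ∈ M, ∃ i : Fin (n + 1), i ≠ 0 ∧ p = (insert (w i) q.1, insert (w i) q.2)}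

/-!
Cut the simplices of `X'` into three levels: the sets `σ ∪ {wᵢ}` with `σ ∈ X` and `i ≥ 2` at the
top, `X` in the middle, and the rest, i.e. the star of `w₁` and the vertices `wᵢ`, at the bottom.
No arc of `H(X')^M'` goes to a higher level: the only arcs of `H(X')` that do are `σ ∪ {w₁} → σ`,
and `M'` reverses them all. Hence a directed cycle stays in one level. Within the two lower levels
no arc is reversed, so that cardinality strictly decreases along arcs. In the top level a cycle
keeps its apex `wᵢ`, and removing this apex gives a cycle of `H(X)^M`.
-/

theorem transGen_fiber_of_antitone {α β : Type*} [PartialOrder β] {r : α → α → Prop} {f : α → β}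
    (hf : ∀ a b, r a b → f b ≤ f a) {a b : α} (hab : Relation.TransGen r a b) (h : f b = f a) :
    Relation.TransGen (fun x y => r x y ∧ f x = f a ∧ f y = f a) a b := by
  induction hab with
  | single hab => exact .single ⟨hab, rfl, h⟩
  | @tail b c hab hbc ih =>
    have hba : f b ≤ f a := by
      simpa [Relation.transGen_eq_self] using hab.lift (p := (· ≥ ·)) f hf
    have hb : f b = f a := hba.antisymm (h ▸ hf b c hbc)
    exact (ih hb).tail ⟨hbc, hb, h⟩

section

variable {U : Type*} [DecidableEq U] {X : Finset (Finset U)} {M : Set (Finset U × Finset U)}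
  {n : ℕ} {w : Fin (n + 1) → U} {σ τ a b : Finset U} {p : Finset U × Finset U} {i : Fin (n + 1)}

theorem isMatching_iff : IsMatching X M ↔ (∀ p ∈ M, HasseArc X p.1 p.2) ∧
    ∀ σ, ∀ p ∈ M, ∀ q ∈ M, (σ = p.1 ∨ σ = p.2) → (σ = q.1 ∨ σ = q.2) → p = q := by
  refine and_congr_right fun _ => ⟨fun h σ p hp q hq hσp hσq => ?_, fun h p hp q hq hpq => ?_⟩
  · by_contra hpq
    grind [h p hp q hq hpq]
  · refine ⟨fun e => hpq ?_, fun e => hpq ?_, fun e => hpq ?_, fun e => hpq ?_⟩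
    exacts [h _ p hp q hq (.inl rfl) (.inl e), h _ p hp q hq (.inl rfl) (.inr e),
      h _ p hp q hq (.inr rfl) (.inl e), h _ p hp q hq (.inr rfl) (.inr e)]

theorem hasseArc_iff_subset :
    HasseArc X σ τ ↔ σ ∈ X ∧ τ ∈ X ∧ τ ⊆ σ ∧ σ.card = τ.card + 1 := by
  refine ⟨fun ⟨hσ, hτ, hsub, hcard⟩ => ⟨hσ, hτ, hsub.subset, hcard⟩,
    fun ⟨hσ, hτ, hsub, hcard⟩ => ⟨hσ, hτ, hsub.ssubset_of_ne ?_, hcard⟩⟩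
  rintro rfl
  omega

theorem mem_coneCx_iff :
    a ∈ coneCx X n w ↔ a ∈ X ∨ ∃ i, ∃ σ ∈ insert ∅ X, a = insert (w i) σ := by
  simp [coneCx, eq_comm]

theorem apex_notMem_of_mem_insert_empty (hwX : ∀ i, ∀ σ ∈ X, w i ∉ σ) (hσ : σ ∈ insert ∅ X)
    (i : Fin (n + 1)) : w i ∉ σ := by
  rcases mem_insert.1 hσ with rfl | hσ
  exacts [notMem_empty _, hwX i σ hσ]

theorem insert_mem_coneCx (i : Fin (n + 1)) (hσ : σ ∈ X) : insert (w i) σ ∈ coneCx X n w :=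
  mem_coneCx_iff.2 (.inr ⟨i, σ, mem_insert_of_mem hσ, rfl⟩)

theorem hasseArc_coneCx_insert_self (hi : w i ∉ σ) (hσ : σ ∈ X) :
    HasseArc (coneCx X n w) (insert (w i) σ) σ :=
  ⟨insert_mem_coneCx i hσ, mem_coneCx_iff.2 (.inl hσ), ssubset_insert hi,
    card_insert_of_notMem hi⟩

theorem HasseArc.insert_apex (hwX : ∀ i, ∀ σ ∈ X, w i ∉ σ) (h : HasseArc X σ τ)
    (i : Fin (n + 1)) : HasseArc (coneCx X n w) (insert (w i) σ) (insert (w i) τ) := by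
  obtain ⟨hσ, hτ, hsub, hcard⟩ := h
  refine hasseArc_iff_subset.2 ⟨insert_mem_coneCx i hσ, insert_mem_coneCx i hτ,
    insert_subset_insert _ hsub.subset, ?_⟩
  rw [card_insert_of_notMem (hwX i σ hσ), card_insert_of_notMem (hwX i τ hτ), hcard]

theorem HasseArc.mem_or_eq_insert_apex (hwX : ∀ i, ∀ σ ∈ X, w i ∉ σ)
    (h : HasseArc (coneCx X n w) a τ) (hτ : τ ∈ X) : a ∈ X ∨ ∃ i, a = insert (w i) τ := by
  obtain ⟨ha, -, hsub, hcard⟩ := h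
  refine (mem_coneCx_iff.1 ha).imp_right ?_
  rintro ⟨i, σ, hσ, rfl⟩
  have hτσ : τ ⊆ σ := (subset_insert_iff_of_notMem (hwX i τ hτ)).1 hsub.subset
  rw [card_insert_of_notMem (apex_notMem_of_mem_insert_empty hwX hσ i)] at hcard
  exact ⟨i, by rw [eq_of_subset_of_card_le hτσ (by omega)]⟩

theorem HasseArc.exists_of_insert_apex (hw : Function.Injective w)
    (hwX : ∀ i, ∀ σ ∈ X, w i ∉ σ) (hτ : τ ∈ X)
    (h : HasseArc (coneCx X n w) a (insert (w i) τ)) :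
    ∃ σ, a = insert (w i) σ ∧ HasseArc X σ τ := by
  obtain ⟨ha, -, hsub, hcard⟩ := h
  have hia : w i ∈ a := hsub.subset (mem_insert_self _ _)
  rcases mem_coneCx_iff.1 ha with haX | ⟨j, σ, hσ, rfl⟩
  · exact absurd hia (hwX i a haX)
  have hwσ := apex_notMem_of_mem_insert_empty hwX hσ i
  obtain rfl : i = j := hw ((mem_insert.1 hia).resolve_right hwσ)
  rw [card_insert_of_notMem hwσ, card_insert_of_notMem (hwX i τ hτ)] at hcard
  have hσX : σ ∈ X := by
    refine (mem_insert.1 hσ).resolve_left ?_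
    rintro rfl
    simp at hcard
  exact ⟨σ, rfl, hasseArc_iff_subset.2
    ⟨hσX, hτ, (insert_subset_insert_iff (hwX i τ hτ)).1 hsub.subset, by omega⟩⟩

theorem coneMatch_eq_of_forall_notMem (hwX : ∀ σ ∈ X, w 0 ∉ σ) (hp : p ∈ coneMatch X M n w)
    (ha : a = p.1 ∨ a = p.2) (hwa : ∀ i ≠ 0, w i ∉ a) :
    p = (insert (w 0) (a.erase (w 0)), a.erase (w 0)) := by
  rcases hp with ⟨σ, hσ, rfl⟩ | ⟨q, -, i, hi, rfl⟩
  · have := hwX σ hσ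
    rcases ha with rfl | rfl <;> simp [this]
  · exfalso
    rcases ha with rfl | rfl <;> exact hwa i hi (mem_insert_self _ _)

theorem exists_mem_of_mem_coneMatch (hw : Function.Injective w) (hwX : ∀ i, ∀ σ ∈ X, w i ∉ σ)
    (hM : ∀ q ∈ M, HasseArc X q.1 q.2) (hp : p ∈ coneMatch X M n w) (ha : a = p.1 ∨ a = p.2)
    (hi : i ≠ 0) (hia : w i ∈ a) :
    ∃ q ∈ M, p = (insert (w i) q.1, insert (w i) q.2) ∧
      (a.erase (w i) = q.1 ∨ a.erase (w i) = q.2) := by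
  rcases hp with ⟨σ, hσ, rfl⟩ | ⟨q, hq, j, -, rfl⟩
  · have := hwX i σ hσ
    have := hw.ne hi
    grind
  · have h1 := hwX i q.1 (hM q hq).1
    have h2 := hwX i q.2 (hM q hq).2.1
    obtain rfl : i = j := by grind [hw.eq_iff]
    refine ⟨q, hq, rfl, ha.imp ?_ ?_⟩ <;> rintro rfl
    exacts [erase_insert h1, erase_insert h2]

theorem IsMatching.coneMatch (hw : Function.Injective w) (hwX : ∀ i, ∀ σ ∈ X, w i ∉ σ)
    (hM : IsMatching X M) : IsMatching (coneCx X n w) (coneMatch X M n w) := by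
  obtain ⟨hArc, hUnique⟩ := isMatching_iff.1 hM
  refine isMatching_iff.2 ⟨?_, fun a p hp p' hp' hap hap' => ?_⟩
  · rintro p (⟨σ, hσ, rfl⟩ | ⟨q, hq, i, -, rfl⟩)
    · exact hasseArc_coneCx_insert_self (hwX 0 σ hσ) hσ
    · exact (hArc q hq).insert_apex hwX i
  by_cases ha : ∃ i ≠ 0, w i ∈ a
  · obtain ⟨i, hi, hia⟩ := ha
    obtain ⟨q, hq, rfl, haq⟩ := exists_mem_of_mem_coneMatch hw hwX hArc hp hap hi hia
    obtain ⟨r, hr, rfl, har⟩ := exists_mem_of_mem_coneMatch hw hwX hArc hp' hap' hi hia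
    rw [hUnique _ q hq r hr haq har]
  · push Not at ha
    rw [coneMatch_eq_of_forall_notMem (hwX 0) hp hap ha,
      coneMatch_eq_of_forall_notMem (hwX 0) hp' hap' ha]

theorem ModArc.exists_of_insert_apex (hw : Function.Injective w)
    (hwX : ∀ i, ∀ σ ∈ X, w i ∉ σ) (hM : ∀ q ∈ M, HasseArc X q.1 q.2) (hi : i ≠ 0) (hτ : τ ∈ X)
    (h : ModArc (coneCx X n w) (coneMatch X M n w) a (insert (w i) τ)) :
    ∃ σ ∈ X, a = insert (w i) σ ∧ ModArc X M σ τ := by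
  rcases h with ⟨hArc, hnot⟩ | hmatch
  · obtain ⟨σ, rfl, hστ⟩ := hArc.exists_of_insert_apex hw hwX hτ
    exact ⟨σ, hστ.1, rfl, .inl ⟨hστ, fun h => hnot (.inr ⟨_, h, i, hi, rfl⟩)⟩⟩
  · obtain ⟨⟨ρ, σ⟩, hq, hpq, -⟩ :=
      exists_mem_of_mem_coneMatch hw hwX hM hmatch (.inl rfl) hi (mem_insert_self _ _)
    obtain ⟨hτρ, rfl⟩ := Prod.mk.inj hpq
    obtain rfl : τ = ρ := insert_erase_invOn.2.injOn (hwX i τ hτ) (hwX i ρ (hM _ hq).1) hτρ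
    exact ⟨σ, (hM _ hq).2.1, rfl, .inr hq⟩

theorem ModArc.transGen_of_insert_apex (hw : Function.Injective w)
    (hwX : ∀ i, ∀ σ ∈ X, w i ∉ σ) (hM : ∀ q ∈ M, HasseArc X q.1 q.2) (hi : i ≠ 0) (hτ : τ ∈ X)
    (h : Relation.TransGen (ModArc (coneCx X n w) (coneMatch X M n w)) a (insert (w i) τ)) :
    ∃ σ ∈ X, a = insert (w i) σ ∧ Relation.TransGen (ModArc X M) σ τ := by
  induction h using Relation.TransGen.head_induction_on with
  | single h =>
    obtain ⟨σ, hσ, rfl, hστ⟩ := h.exists_of_insert_apex hw hwX hM hi hτ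
    exact ⟨σ, hσ, rfl, .single hστ⟩
  | head h _ ih =>
    obtain ⟨ρ, hρ, rfl, hρτ⟩ := ih
    obtain ⟨σ, hσ, rfl, hσρ⟩ := h.exists_of_insert_apex hw hwX hM hi hρ
    exact ⟨σ, hσ, rfl, .head hσρ hρτ⟩

/-- The level of a simplex `a` of `X'`, which does not increase along the arcs of `H(X')^M'`:
`2` for `σ ∪ {wᵢ}` with `σ ∈ X` and `wᵢ` not the first apex `w 0`, `1` on `X`, and `0` otherwise.
The vertices `{wᵢ}` have level `0`, so that level `2` consists of disjoint copies of `X`. -/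
def coneLevel (X : Finset (Finset U)) (w : Fin (n + 1) → U) (a : Finset U) : ℕ :=
  if a ∈ X then 1 else if ∃ i ≠ 0, ∃ σ ∈ X, a = insert (w i) σ then 2 else 0

theorem coneLevel_eq_one_iff : coneLevel X w a = 1 ↔ a ∈ X := by
  unfold coneLevel
  split_ifs <;> simp_all

theorem coneLevel_eq_two_iff (hwX : ∀ i, ∀ σ ∈ X, w i ∉ σ) :
    coneLevel X w a = 2 ↔ ∃ i ≠ 0, ∃ σ ∈ X, a = insert (w i) σ := by
  unfold coneLevel
  split_ifs with haX htop
  · refine iff_of_false (by simp) ?_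
    rintro ⟨i, -, σ, -, rfl⟩
    exact hwX i _ haX (mem_insert_self _ _)
  · exact iff_of_true rfl htop
  · exact iff_of_false (by simp) htop

theorem coneLevel_le_two : coneLevel X w a ≤ 2 := by
  unfold coneLevel
  split_ifs <;> simp

theorem ModArc.mem_or_coneLevel_eq_two (hwX : ∀ i, ∀ σ ∈ X, w i ∉ σ)
    (h : ModArc (coneCx X n w) (coneMatch X M n w) a τ) (hτ : τ ∈ X) :
    a ∈ X ∨ coneLevel X w a = 2 := by
  rcases h with ⟨hArc, hnot⟩ | ⟨σ, -, h⟩ | ⟨q, -, i, -, h⟩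
  · refine (hArc.mem_or_eq_insert_apex hwX hτ).imp_right ?_
    rintro ⟨i, rfl⟩
    refine (coneLevel_eq_two_iff hwX).2 ⟨i, ?_, τ, hτ, rfl⟩
    rintro rfl
    exact hnot (.inl ⟨τ, hτ, rfl⟩)
  · obtain ⟨rfl, -⟩ := Prod.mk.inj h
    exact absurd (mem_insert_self _ _) (hwX 0 _ hτ)
  · obtain ⟨rfl, -⟩ := Prod.mk.inj h
    exact absurd (mem_insert_self _ _) (hwX i _ hτ)

theorem ModArc.coneLevel_le (hw : Function.Injective w) (hwX : ∀ i, ∀ σ ∈ X, w i ∉ σ)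
    (hM : ∀ q ∈ M, HasseArc X q.1 q.2)
    (h : ModArc (coneCx X n w) (coneMatch X M n w) a b) :
    coneLevel X w b ≤ coneLevel X w a := by
  by_cases hb1 : b ∈ X
  · have := h.mem_or_coneLevel_eq_two hwX hb1
    grind [coneLevel_eq_one_iff]
  by_cases hb2 : ∃ i ≠ 0, ∃ σ ∈ X, b = insert (w i) σ
  · obtain ⟨i, hi, τ, hτ, rfl⟩ := hb2
    obtain ⟨σ, hσ, rfl, -⟩ := h.exists_of_insert_apex hw hwX hM hi hτ
    rw [(coneLevel_eq_two_iff hwX).2 ⟨i, hi, σ, hσ, rfl⟩]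
    exact coneLevel_le_two
  · simp [coneLevel, hb1, hb2]

theorem ModArc.card_lt_of_coneLevel_eq (hwX : ∀ i, ∀ σ ∈ X, w i ∉ σ)
    (hM : ∀ q ∈ M, HasseArc X q.1 q.2)
    (h : ModArc (coneCx X n w) (coneMatch X M n w) a b)
    (hab : coneLevel X w a = coneLevel X w b) (hb : coneLevel X w b ≠ 2) : b.card < a.card := by
  rcases h with ⟨⟨-, -, hsub, -⟩, -⟩ | ⟨σ, hσ, h⟩ | ⟨q, hq, i, hi, h⟩
  · exact card_lt_card hsub
  · obtain ⟨rfl, rfl⟩ := Prod.mk.inj h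
    rw [coneLevel_eq_one_iff.2 hσ, eq_comm, coneLevel_eq_one_iff] at hab
    exact absurd (mem_insert_self _ _) (hwX 0 _ hab)
  · obtain ⟨rfl, rfl⟩ := Prod.mk.inj h
    exact absurd ((coneLevel_eq_two_iff hwX).2 ⟨i, hi, q.1, (hM q hq).1, rfl⟩) hb

theorem coneMatch_isAcyclicMatching_general (hw : Function.Injective w)
    (hwX : ∀ i, ∀ σ ∈ X, w i ∉ σ) (hM : IsAcyclicMatching X M) :
    IsAcyclicMatching (coneCx X n w) (coneMatch X M n w) := by
  refine ⟨hM.1.coneMatch hw hwX, fun a hcycle => ?_⟩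
  by_cases ha : coneLevel X w a = 2
  · obtain ⟨i, hi, σ, hσ, rfl⟩ := (coneLevel_eq_two_iff hwX).1 ha
    obtain ⟨τ, hτ, hτσ, hcycle⟩ := ModArc.transGen_of_insert_apex hw hwX hM.1.1 hi hσ hcycle
    obtain rfl : σ = τ := insert_erase_invOn.2.injOn (hwX i σ hσ) (hwX i τ hτ) hτσ
    exact hM.2 σ hcycle
  · have hlevel := transGen_fiber_of_antitone
      (fun _ _ h => h.coneLevel_le hw hwX hM.1.1) hcycle rfl
    have hcard : Relation.TransGen (· > ·) a.card a.card :=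
      hlevel.lift card fun x y ⟨hxy, hx, hy⟩ =>
        hxy.card_lt_of_coneLevel_eq hwX hM.1.1 (hx.trans hy.symm) (hy ▸ ha)
    rw [Relation.transGen_eq_self] at hcard
    exact lt_irrefl _ hcard

end

/-- `M'` is an acyclic matching on `X'`. -/
theorem coneMatch_isAcyclicMatching {U : Type*} [DecidableEq U] (d n : ℕ)
    (X : Finset (Finset U)) (hX : IsComplex X) (hd : HasDim X d)
    (hn : X.card = n) (hn1 : 1 ≤ n)
    (w : Fin (n + 1) → U) (hw : Function.Injective w)
    (hwX : ∀ i : Fin (n + 1), ∀ σ ∈ X, w i ∉ σ)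
    (M : Set (Finset U × Finset U)) (hM : IsAcyclicMatching X M) :
    IsAcyclicMatching (coneCx X n w) (coneMatch X M n w) :=
  coneMatch_isAcyclicMatching_general hw hwX hM
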